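/- Let q = 2^5 = 32 and let ∘ denote the symplectic Knuth presemifield multiplication on F_32 (with n = 5). Then there is no F_2-linear bijection f : F_32 → F_32 such that for every nonzero a ∈ F_32 the set {x ∈ F_32 : f(x) + x ∘ a = 0} has exactly 2 elements. (Equivalently, the symplectic presemifield plane Π(K_5^{td}) contains no translation hyperoval of type (a), i.e., no translation hyperoval whose carrier points are (0) and (∞).) -/

import Mathlib

/-!
Let `x \ v` denote the solution `a` of `x ∘ a = v` for `x ≠ 0`, and `0 \ v = 0`. The kernel
condition says that every `a ≠ 0` solves `f(x) = x ∘ a` for exactly one `x ≠ 0`, so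
`x ↦ x \ f(x)` is injective. Let `t⁵ = t² + 1`. Since `x \ v` is additive in `v`, the values
`x \ f(x)` for `x` in the span of `1, …, tᵏ⁻¹` depend only on `f(1), …, f(tᵏ⁻¹)`. So `f` can be
sought by choosing its values on the basis one after the other, discarding a choice as soon as two
values of `x \ f(x)` coincide.

Two remarks make this search short. An injective `x ↦ x \ f(x)` runs through the whole field, so its
values sum to `0`; this forces `Tr (f 1) = 0` and links `f(t⁴)` to the earlier choices. Replacing
`t` by a conjugate root leaves only three possibilities for the coordinates of `f(1)`.
-/

namespace SymplecticKnuth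

open Finset

section Presemifield

variable {F : Type*} [Field F]

/-- The absolute trace of `F₃₂`, as a polynomial with values in `F`. -/
def absTrace (x : F) : F := x + x ^ 2 + x ^ 4 + x ^ 8 + x ^ 16

/-- The multiplication `x ∘ y` of the symplectic Knuth presemifield of order `32`. -/
def knuthMul (x y : F) : F := x * y + absTrace x * y ^ 16 + absTrace (x ^ 2 * y)

/-- The left quotient `x \ v`: the solution `a` of `x ∘ a = v` when `x ≠ 0`, and `0` when `x = 0`.
With `y = x² a` and `u = Tr (x v)`, the equation reads `y + Tr(x) y¹⁶ + x Tr(y) = x v`. It forces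
`Tr y = u`, hence `y + Tr(x) y¹⁶ = g` with `g = x (v + u)`. The factor `x²⁹` is `x⁻²`. -/
def knuthDiv (x v : F) : F :=
  let u := absTrace (x * v)
  let g := x * (v + u)
  (g + absTrace x * (g ^ 2 + g ^ 8 + u)) * x ^ 29

@[simp]
theorem absTrace_zero : absTrace (0 : F) = 0 := by simp [absTrace]

theorem zero_knuthDiv (v : F) : knuthDiv 0 v = 0 := by simp [knuthDiv]

theorem zero_knuthMul (a : F) : knuthMul 0 a = 0 := by simp [knuthMul]

theorem knuthMul_zero (x : F) : knuthMul x 0 = 0 := by simp [knuthMul]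

theorem mul_knuthMul_mul_pow [Fintype F] (hF : Fintype.card F = 32) {x : F} (hx : x ≠ 0)
    (y : F) : x * knuthMul x (y * x ^ 29) = y + absTrace x * y ^ 16 + x * absTrace y := by
  have h31 : x ^ 31 = 1 := by rw [← FiniteField.pow_card_sub_one_eq_one x hx, hF]
  have hy : x ^ 2 * (y * x ^ 29) = y := by linear_combination y * h31
  have hy16 : x * (y * x ^ 29) ^ 16 = y ^ 16 := by
    calc x * (y * x ^ 29) ^ 16 = y ^ 16 * (x ^ 31) ^ 15 := by ring
      _ = y ^ 16 := by rw [h31, one_pow, mul_one]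
  rw [knuthMul, hy]
  linear_combination hy + absTrace x * hy16

variable [CharP F 2]

theorem absTrace_add (x y : F) : absTrace (x + y) = absTrace x + absTrace y := by
  have h (k : ℕ) := add_pow_char_pow x y 2 k
  have h1 := h 1; have h2 := h 2; have h3 := h 3; have h4 := h 4
  norm_num at h1 h2 h3 h4
  simp only [absTrace, h1, h2, h3, h4]
  ring

theorem absTrace_sq (x : F) : absTrace (x ^ 2) = absTrace x ^ 2 := by
  simp only [absTrace]
  grind

theorem absTrace_add_of_absTrace_eq_zero {g : F} (hg : absTrace g = 0) (u : F) :
    absTrace (g + (g ^ 2 + g ^ 8 + u)) = absTrace u := by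
  have hg8 : absTrace (g ^ 8) = 0 := by
    rw [show g ^ 8 = ((g ^ 2) ^ 2) ^ 2 by ring]
    simp [absTrace_sq, hg]
  simp [absTrace_add, absTrace_sq, hg, hg8]

theorem knuthDiv_add (x v w : F) : knuthDiv x (v + w) = knuthDiv x v + knuthDiv x w := by
  simp only [knuthDiv, mul_add, absTrace_add]
  grind

/-- Left division by `x`, bundled as an additive homomorphism. -/
def knuthDivHom (x : F) : F →+ F := AddMonoidHom.mk' (knuthDiv x) (knuthDiv_add x)

variable [Fintype F] (hF : Fintype.card F = 32)
include hF

theorem absTrace_sq_self (x : F) : absTrace x ^ 2 = absTrace x := by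
  have hx : x ^ 32 = x := hF ▸ FiniteField.pow_card x
  simp only [absTrace]
  grind

theorem absTrace_eq_zero_or_one (x : F) : absTrace x = 0 ∨ absTrace x = 1 := by
  have h := absTrace_sq_self hF x
  grind

theorem absTrace_mul_absTrace (x y : F) : absTrace (x * absTrace y) = absTrace x * absTrace y := by
  rcases absTrace_eq_zero_or_one hF y with h | h <;> simp [h]

theorem absTrace_absTrace (x : F) : absTrace (absTrace x) = absTrace x := by
  have h2 : (2 : F) = 0 := CharTwo.two_eq_zero
  rcases absTrace_eq_zero_or_one hF x with h | h <;> rw [h]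
  · exact absTrace_zero
  · rw [absTrace]
    linear_combination 2 * h2

theorem add_pow_sixteen_of_absTrace_eq_zero {g u : F} (hg : absTrace g = 0) (hu : u ^ 2 = u) :
    g + (g ^ 2 + g ^ 8 + u) + (g + (g ^ 2 + g ^ 8 + u)) ^ 16 = g := by
  have h2 : (2 : F) = 0 := CharTwo.two_eq_zero
  have h16 (a b : F) : (a + b) ^ 16 = a ^ 16 + b ^ 16 := add_pow_char_pow a b 2 4
  have hg32 : g ^ 32 = g := hF ▸ FiniteField.pow_card g
  have hg128 : g ^ 128 = g ^ 4 := by rw [show g ^ 128 = (g ^ 32) ^ 4 by ring, hg32]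
  have hu16 : u ^ 16 = u := by rw [show u ^ 16 = (((u ^ 2) ^ 2) ^ 2) ^ 2 by ring, hu, hu, hu, hu]
  rw [absTrace] at hg
  rw [h16, h16, h16, hu16]
  linear_combination hg + hg32 + hg128 + u * h2

theorem knuthMul_knuthDiv {x : F} (hx : x ≠ 0) (v : F) : knuthMul x (knuthDiv x v) = v := by
  have h2 : (2 : F) = 0 := CharTwo.two_eq_zero
  obtain ⟨u, hu⟩ : ∃ u, u = absTrace (x * v) := ⟨_, rfl⟩
  obtain ⟨g, hg⟩ : ∃ g, g = x * (v + u) := ⟨_, rfl⟩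
  have hTg : absTrace g = u + absTrace x * u := by
    rw [hg, mul_add, absTrace_add, ← hu, hu, absTrace_mul_absTrace hF]
  apply mul_left_cancel₀ hx
  simp only [knuthDiv, ← hu, ← hg]
  rw [mul_knuthMul_mul_pow hF hx]
  rcases absTrace_eq_zero_or_one hF x with h | h
  · rw [h, zero_mul, zero_mul, add_zero, add_zero, hTg, h, hg]
    linear_combination x * u * h2
  · have hg0 : absTrace g = 0 := by rw [hTg, h]; linear_combination u * h2
    have hu2 : u ^ 2 = u := hu ▸ absTrace_sq_self hF _
    have hTu : absTrace u = u := hu ▸ absTrace_absTrace hF _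
    rw [h, one_mul, one_mul, absTrace_add_of_absTrace_eq_zero hg0,
      add_pow_sixteen_of_absTrace_eq_zero hF hg0 hu2, hTu, hg]
    linear_combination x * u * h2

theorem injective_knuthDiv {f : F →+ F} (hf : Function.Injective f)
    (hker : ∀ a : F, a ≠ 0 → {x : F | f x + knuthMul x a = 0}.ncard = 2) :
    Function.Injective fun x ↦ knuthDiv x (f x) := by
  have mem_kernel (x : F) : f x + knuthMul x (knuthDiv x (f x)) = 0 := by
    rcases eq_or_ne x 0 with rfl | hx
    · simp [zero_knuthMul]
    · rw [knuthMul_knuthDiv hF hx, CharTwo.add_self_eq_zero]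
  intro x y (hxy : knuthDiv x (f x) = knuthDiv y (f y))
  obtain ⟨a, hax⟩ : ∃ a, a = knuthDiv x (f x) := ⟨_, rfl⟩
  have hay := hax.trans hxy
  have hx := hax ▸ mem_kernel x
  have hy := hay ▸ mem_kernel y
  rcases eq_or_ne a 0 with rfl | ha
  · simp only [knuthMul_zero, add_zero] at hx hy
    exact hf (hx.trans hy.symm)
  · have hx0 : x ≠ 0 := by rintro rfl; exact ha (hax.trans (zero_knuthDiv _))
    have hy0 : y ≠ 0 := by rintro rfl; exact ha (hay.trans (zero_knuthDiv _))
    by_contra hne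
    have : ({0, x, y} : Set F) ⊆ {x | f x + knuthMul x a = 0} := by
      rintro z (rfl | rfl | rfl)
      exacts [by simp [zero_knuthMul], hx, hy]
    have hle := Set.ncard_le_ncard this
    rw [hker a ha, Set.ncard_eq_three.mpr ⟨0, x, y, hx0.symm, hy0.symm, hne, rfl⟩] at hle
    omega

end Presemifield

theorem pow_thirtyTwo_eq_self {R : Type*} [CommRing R] (h2 : (2 : R) = 0) {r : R}
    (hr : r ^ 5 = r ^ 2 + 1) : r ^ 32 = r := by
  have hr8 : r ^ 8 = r ^ 3 + r ^ 2 + 1 := by linear_combination (r ^ 3 + 1) * hr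
  calc r ^ 32 = (r ^ 3 + r ^ 2 + 1) ^ 4 := by rw [← hr8]; ring
    _ = r := by grind

open Polynomial in
theorem exists_pow_five_eq {F : Type*} [Field F] [CharP F 2] [Fintype F]
    (hF : Fintype.card F = 32) : ∃ t : F, t ^ 5 = t ^ 2 + 1 := by
  let p : F[X] := X ^ 5 - (X ^ 2 + 1)
  have hdvd : p ∣ X ^ 32 - X := by
    rw [← AdjoinRoot.mk_eq_zero, map_sub, map_pow, AdjoinRoot.mk_X, sub_eq_zero]
    refine pow_thirtyTwo_eq_self ?_ (sub_eq_zero.mp (AdjoinRoot.mk_self (f := p)))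
    rw [← map_ofNat (AdjoinRoot.of p) 2, CharTwo.two_eq_zero, map_zero]
  have hsplits : (X ^ 32 - X : F[X]).Splits := by
    simpa [hF] using splits_X_pow_nat_card_sub_X (K := F)
  have hdeg : p.degree = 5 := by
    simp only [p]
    compute_degree!
  obtain ⟨t, ht⟩ := (hsplits.of_dvd (FiniteField.X_pow_card_sub_X_ne_zero F (by norm_num))
    hdvd).exists_eval_eq_zero (by simp [hdeg])
  exact ⟨t, by simpa [p, sub_eq_zero] using ht⟩

section Codes

/-- The bitwise sum `g 0 ^^^ ⋯ ^^^ g (n - 1)`. -/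
def xorSum (g : ℕ → ℕ) : ℕ → ℕ
  | 0 => 0
  | n + 1 => xorSum g n ^^^ g n

/-- The value at `n` of the `F₂`-linear map on five-bit codes sending `2 ^ i` to `g i`. -/
def bitXor (g : ℕ → ℕ) (n : ℕ) : ℕ := xorSum (fun i ↦ if n.testBit i then g i else 0) 5

/-- Multiplication by `t` on codes; `37 = 2⁵ + 2² + 1` encodes the relation `t⁵ = t² + 1`. -/
def codeMulX (n : ℕ) : ℕ := 2 * n ^^^ 37 * (n / 16 % 2)

/-- The field multiplication on codes. -/
def codeMul (m n : ℕ) : ℕ := bitXor (fun i ↦ codeMulX^[i] m) n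

/-- The Frobenius map on codes. -/
def codeSq (n : ℕ) : ℕ := codeMul n n

/-- `absTrace` on codes. -/
def codeTrace (n : ℕ) : ℕ := xorSum (fun k ↦ codeSq^[k] n) 5

/-- `knuthDiv` on codes, with the factor `x²⁹` written as `x · x⁴ · x⁸ · x¹⁶`. -/
def codeDiv (x v : ℕ) : ℕ :=
  let u := codeTrace (codeMul x v)
  let g := codeMul x (v ^^^ u)
  let y := g ^^^ codeMul (codeTrace x) (codeSq g ^^^ codeSq^[3] g ^^^ u)
  codeMul y (codeMul x (codeMul (codeSq^[2] x) (codeMul (codeSq^[3] x) (codeSq^[4] x))))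

variable {F : Type*} [Field F]

/-- The value at `n` of the `F₂`-linear map from five-bit codes to `F` sending `2 ^ i` to `g i`. -/
def bitSum (g : ℕ → F) (n : ℕ) : F := ∑ i ∈ range 5, if n.testBit i then g i else 0

/-- The field element with code `n`: the low five bits of `n` are its coordinates with respect to
`1, t, t², t³, t⁴`. -/
def codeEval (t : F) (n : ℕ) : F := bitSum (fun i ↦ t ^ i) n

theorem map_bitSum (φ : F →+ F) (g : ℕ → F) (n : ℕ) :
    φ (bitSum g n) = bitSum (fun i ↦ φ (g i)) n := by
  simp only [bitSum, map_sum, apply_ite φ, map_zero]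

theorem mul_bitSum (a : F) (g : ℕ → F) (n : ℕ) : a * bitSum g n = bitSum (fun i ↦ a * g i) n := by
  simp only [bitSum, mul_sum, mul_ite, mul_zero]

@[simp]
theorem codeEval_zero (t : F) : codeEval t 0 = 0 := by simp [codeEval, bitSum]

theorem codeEval_two_pow (t : F) {i : ℕ} (hi : i < 5) : codeEval t (2 ^ i) = t ^ i := by
  simp [codeEval, bitSum, Nat.testBit_two_pow, hi]

variable [CharP F 2]

theorem bitSum_xor (g : ℕ → F) (m n : ℕ) : bitSum g (m ^^^ n) = bitSum g m + bitSum g n := by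
  rw [bitSum, bitSum, bitSum, ← sum_add_distrib]
  refine sum_congr rfl fun i _ ↦ ?_
  rw [Nat.testBit_xor]
  cases m.testBit i <;> cases n.testBit i <;> simp [CharTwo.add_self_eq_zero]

theorem codeEval_xor (t : F) (m n : ℕ) : codeEval t (m ^^^ n) = codeEval t m + codeEval t n :=
  bitSum_xor _ m n

theorem codeEval_xorSum (t : F) (g : ℕ → ℕ) (n : ℕ) :
    codeEval t (xorSum g n) = ∑ i ∈ range n, codeEval t (g i) := by
  induction n with
  | zero => simp [xorSum]
  | succ n ih => rw [xorSum, codeEval_xor, ih, sum_range_succ]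

theorem codeEval_bitXor (t : F) (g : ℕ → ℕ) (n : ℕ) :
    codeEval t (bitXor g n) = bitSum (fun i ↦ codeEval t (g i)) n := by
  simp only [bitXor, codeEval_xorSum, apply_ite (codeEval t), codeEval_zero, bitSum]

section Root

variable {t : F} (ht : t ^ 5 = t ^ 2 + 1)
include ht

theorem codeEval_codeMulX (n : ℕ) : codeEval t (codeMulX n) = codeEval t n * t := by
  have hshift : codeEval t (2 * n) + (if n.testBit 4 then t ^ 5 else 0) = codeEval t n * t := by
    have hbit (i : ℕ) : (2 * n).testBit (i + 1) = n.testBit i := by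
      rw [mul_comm, ← pow_one 2, Nat.testBit_mul_two_pow]; simp
    simp only [codeEval, bitSum, sum_mul, ite_mul, zero_mul, ← pow_succ]
    rw [sum_range_succ', sum_range_succ _ 4]
    simp [hbit]
  have hcarry : codeEval t (37 * (n / 16 % 2)) = if n.testBit 4 then t ^ 5 else 0 := by
    have h4 : n.testBit 4 = decide (n / 16 % 2 = 1) := Nat.testBit_eq_decide_div_mod_eq
    rw [h4]
    rcases Nat.mod_two_eq_zero_or_one (n / 16) with h | h <;>
      simp [h, ht, codeEval, bitSum, sum_range_succ, Nat.testBit, add_comm]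
  rw [codeMulX, codeEval_xor, hcarry, hshift]

theorem codeEval_iterate_codeMulX (k n : ℕ) :
    codeEval t (codeMulX^[k] n) = codeEval t n * t ^ k := by
  induction k with
  | zero => simp
  | succ k ih => rw [Function.iterate_succ_apply', codeEval_codeMulX ht, ih, pow_succ, mul_assoc]

theorem codeEval_codeMul (m n : ℕ) : codeEval t (codeMul m n) = codeEval t m * codeEval t n := by
  rw [codeMul, codeEval_bitXor, codeEval, codeEval, mul_bitSum]
  simp only [codeEval_iterate_codeMulX ht]
  rfl

theorem codeEval_iterate_codeSq (k n : ℕ) : codeEval t (codeSq^[k] n) = codeEval t n ^ 2 ^ k := by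
  induction k with
  | zero => simp
  | succ k ih =>
    rw [Function.iterate_succ_apply', codeSq, codeEval_codeMul ht, ih, pow_succ, pow_mul, sq]

theorem codeEval_codeTrace (n : ℕ) : codeEval t (codeTrace n) = absTrace (codeEval t n) := by
  simp [codeTrace, codeEval_xorSum, codeEval_iterate_codeSq ht, sum_range_succ, absTrace]

theorem codeEval_codeDiv (x v : ℕ) :
    codeEval t (codeDiv x v) = knuthDiv (codeEval t x) (codeEval t v) := by
  have hsq (k n : ℕ) := codeEval_iterate_codeSq ht k n
  have hsq1 (n : ℕ) : codeEval t (codeSq n) = codeEval t n ^ 2 := hsq 1 n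
  simp only [codeDiv, knuthDiv, codeEval_codeMul ht, codeEval_codeTrace ht, codeEval_xor, hsq, hsq1]
  ring

theorem codeEval_eq_zero {n : ℕ} (hn : n < 32) (h : codeEval t n = 0) : n = 0 := by
  by_contra h0
  have hinv : ∀ z < 32, z ≠ 0 → ∃ w < 32, codeMul z w = 1 := by decide +kernel
  obtain ⟨w, -, hw⟩ := hinv n hn h0
  have hone : codeEval t 1 = 0 := by rw [← hw, codeEval_codeMul ht, h, zero_mul]
  exact one_ne_zero (by rw [← pow_zero t, ← codeEval_two_pow t (by norm_num), pow_zero, hone])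

theorem codeEval_injOn : Set.InjOn (codeEval t) (range 32) := by
  intro m hm n hn h
  simp only [coe_range, Set.mem_Iio] at hm hn
  refine Nat.xor_eq_zero_iff.mp (codeEval_eq_zero ht (Nat.xor_lt_two_pow (n := 5) hm hn) ?_)
  rw [codeEval_xor, h, CharTwo.add_self_eq_zero]

variable [Fintype F] (hF : Fintype.card F = 32)
include hF

theorem codeEval_surjOn : Set.SurjOn (codeEval t) (range 32) (univ : Finset F) :=
  surjOn_of_injOn_of_card_le _ (by simp) (codeEval_injOn ht) (by simp [hF])

theorem exists_codeEval_eq (y : F) : ∃ n < 32, codeEval t n = y := by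
  simpa using codeEval_surjOn ht hF (mem_coe.mpr (mem_univ y))

theorem exists_codes (f : F → F) :
    ∃ v : ℕ → ℕ, (∀ j, v j < 32) ∧ ∀ j, codeEval t (v j) = f (t ^ j) :=
  ⟨_, forall_and.mp fun j ↦ (exists_codeEval_eq ht hF (f (t ^ j))).choose_spec⟩

theorem sum_codeEval {M : Type*} [AddCommMonoid M] (g : F → M) :
    ∑ n ∈ range 32, g (codeEval t n) = ∑ y, g y :=
  sum_nbij _ (by simp) (codeEval_injOn ht) (codeEval_surjOn ht hF) (by simp)

end Root

end Codes

section Words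

/-- The `x`-th base-`32` digit of `w`. -/
def digit (w x : ℕ) : ℕ := w / 32 ^ x % 32

/-- The word whose digit `x < 32` encodes the contribution `x \ tⁱ` to `x \ f(x)` of the coordinate
`tⁱ` of `f(tʲ)`, which is present when bit `j` of `x` is set. Digit `32` is the sum of all of
these. -/
def unitWord (j i : ℕ) : ℕ :=
  xorSum (fun x ↦ if x.testBit j then codeDiv x (2 ^ i) * (32 ^ x + 32 ^ 32) else 0) 32

/-- The joint contribution of `f(tʲ)` to the values `x \ f(x)`, when `f(tʲ)` has code `v`. -/
def rowWord (j v : ℕ) : ℕ := bitXor (unitWord j) v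

/-- The table of the values `x \ f(x)` when `f(tʲ)` has code `v j`, restricted to the contributions
of `j < k`. Its digits `x < 2 ^ k` are final. -/
def partialWord (v : ℕ → ℕ) : ℕ → ℕ := xorSum fun j ↦ rowWord j (v j)

/-- Digit `32` of `w` is a parity check on the preceding digits. -/
def ParityBalanced (w : ℕ) : Prop := digit w 32 = xorSum (digit w) 32

theorem digit_lt (w x : ℕ) : digit w x < 32 := Nat.mod_lt _ (by norm_num)

theorem digit_zero (x : ℕ) : digit 0 x = 0 := by simp [digit]

theorem digit_xor (v w x : ℕ) : digit (v ^^^ w) x = digit v x ^^^ digit w x := by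
  rw [digit, digit, digit, show 32 ^ x = 2 ^ (5 * x) by rw [pow_mul]; norm_num,
    show 32 = 2 ^ 5 by norm_num, Nat.xor_div_two_pow, Nat.xor_mod_two_pow]

theorem digit_xorSum (g : ℕ → ℕ) (n x : ℕ) :
    digit (xorSum g n) x = xorSum (fun i ↦ digit (g i) x) n := by
  induction n with
  | zero => exact digit_zero x
  | succ n ih => rw [xorSum, digit_xor, ih, xorSum]

theorem digit_bitXor (g : ℕ → ℕ) (n x : ℕ) :
    digit (bitXor g n) x = bitXor (fun i ↦ digit (g i) x) n := by
  simp only [bitXor, digit_xorSum, apply_ite (digit · x), digit_zero]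

theorem xorSum_xor (g h : ℕ → ℕ) (n : ℕ) :
    xorSum (fun i ↦ g i ^^^ h i) n = xorSum g n ^^^ xorSum h n := by
  induction n with
  | zero => simp [xorSum]
  | succ n ih => rw [xorSum, xorSum, xorSum, ih]; ac_rfl

theorem parityBalanced_zero : ParityBalanced 0 := by
  rw [ParityBalanced]
  decide

theorem ParityBalanced.xor {v w : ℕ} (hv : ParityBalanced v) (hw : ParityBalanced w) :
    ParityBalanced (v ^^^ w) := by
  have hdigit : digit (v ^^^ w) = fun x ↦ digit v x ^^^ digit w x := funext (digit_xor v w)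
  rw [ParityBalanced] at *
  rw [hdigit, xorSum_xor, ← hv, ← hw]

theorem ParityBalanced.xorSum {g : ℕ → ℕ} {n : ℕ} (h : ∀ i < n, ParityBalanced (g i)) :
    ParityBalanced (xorSum g n) := by
  induction n with
  | zero => exact parityBalanced_zero
  | succ n ih => exact (ih fun i hi ↦ h i (by omega)).xor (h n (by omega))

set_option maxRecDepth 100000 in
theorem digit_unitWord : ∀ j < 5, ∀ i < 5, ∀ x < 32,
    digit (unitWord j i) x = if x.testBit j then codeDiv x (2 ^ i) else 0 := by
  decide +kernel

set_option maxRecDepth 100000 in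
theorem parityBalanced_unitWord : ∀ j < 5, ∀ i < 5, ParityBalanced (unitWord j i) := by
  unfold ParityBalanced
  decide +kernel

theorem parityBalanced_rowWord {j : ℕ} (hj : j < 5) (v : ℕ) : ParityBalanced (rowWord j v) := by
  refine ParityBalanced.xorSum fun i hi ↦ ?_
  split_ifs
  exacts [parityBalanced_unitWord j hj i hi, parityBalanced_zero]

set_option maxRecDepth 100000 in
theorem codeTrace_digit_rowWord : ∀ j < 5, ∀ v < 32,
    codeTrace (digit (rowWord j v) 32) = if j = 0 then codeTrace v else 0 := by
  decide +kernel

variable {F : Type*} [Field F] [CharP F 2] {t : F} (ht : t ^ 5 = t ^ 2 + 1)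
include ht

theorem codeEval_digit_rowWord {j x : ℕ} (hj : j < 5) (hx : x < 32) (v : ℕ) :
    codeEval t (digit (rowWord j v) x) =
      if x.testBit j then knuthDiv (codeEval t x) (codeEval t v) else 0 := by
  have hunit : ∀ i ∈ range 5, codeEval t (digit (unitWord j i) x) =
      if x.testBit j then knuthDiv (codeEval t x) (t ^ i) else 0 := by
    intro i hi
    have hi := mem_range.mp hi
    rw [digit_unitWord j hj i hi x hx, apply_ite (codeEval t), codeEval_codeDiv ht,
      codeEval_two_pow t hi, codeEval_zero]
  have hdiv : knuthDiv (codeEval t x) (codeEval t v) = _ :=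
    map_bitSum (knuthDivHom (codeEval t x)) _ v
  rw [rowWord, digit_bitXor, codeEval_bitXor, hdiv, bitSum,
    sum_congr rfl fun i hi ↦ by rw [hunit i hi]]
  split_ifs
  · rfl
  · simp

variable {f : F →+ F} {v : ℕ → ℕ} (hv : ∀ j, codeEval t (v j) = f (t ^ j))
include hv

theorem codeEval_digit_partialWord {k x : ℕ} (hk : k ≤ 5) (hx : x < 2 ^ k) :
    codeEval t (digit (partialWord v k) x) =
      knuthDiv (codeEval t x) (f (codeEval t x)) := by
  have hx32 : x < 32 := hx.trans_le (Nat.pow_le_pow_right two_pos hk : 2 ^ k ≤ 2 ^ 5)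
  have hf : knuthDiv (codeEval t x) (f (codeEval t x)) = _ :=
    map_bitSum ((knuthDivHom (codeEval t x)).comp f) _ x
  rw [partialWord, digit_xorSum, codeEval_xorSum, hf, bitSum,
    ← sum_subset (range_subset_range.mpr hk) fun j _ hj ↦ ?_]
  · refine sum_congr rfl fun j hj ↦ ?_
    have hj5 : j < 5 := (mem_range.mp hj).trans_le hk
    rw [codeEval_digit_rowWord ht hj5 hx32, hv j]
    rfl
  · have hkj : k ≤ j := by simpa using hj
    simp [Nat.testBit_lt_two_pow (hx.trans_le (Nat.pow_le_pow_right two_pos hkj))]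

theorem digit_partialWord_of_lt {k x : ℕ} (hk : k ≤ 5) (hx : x < 2 ^ k) :
    digit (partialWord v k) x = digit (partialWord v 5) x := by
  refine codeEval_injOn ht (by simp [digit_lt]) (by simp [digit_lt]) ?_
  rw [codeEval_digit_partialWord ht hv hk hx, codeEval_digit_partialWord ht hv le_rfl
    (hx.trans_le (Nat.pow_le_pow_right two_pos hk))]

theorem digit_partialWord_zero : digit (partialWord v 5) 0 = 0 :=
  (digit_partialWord_of_lt ht hv (k := 0) (by norm_num) one_pos).symm.trans (digit_zero 0)

variable (hinj : Function.Injective fun x ↦ knuthDiv x (f x))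
include hinj

theorem injOn_digit_partialWord : Set.InjOn (digit (partialWord v 5)) (Set.Iio 32) := by
  intro x hx y hy hxy
  apply codeEval_injOn ht (by simpa using hx) (by simpa using hy)
  apply hinj
  have heval {z : ℕ} (hz : z < 32) := codeEval_digit_partialWord ht hv le_rfl hz
  exact (heval hx).symm.trans ((congrArg (codeEval t) hxy).trans (heval hy))

variable [Fintype F] (hF : Fintype.card F = 32)
include hF

theorem digit_partialWord_thirtyTwo : digit (partialWord v 5) 32 = 0 := by
  apply codeEval_eq_zero ht (digit_lt _ _)
  have hbal : ParityBalanced (partialWord v 5) :=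
    ParityBalanced.xorSum fun j hj ↦ parityBalanced_rowWord hj _
  calc codeEval t (digit (partialWord v 5) 32)
      = ∑ x ∈ range 32, codeEval t (digit (partialWord v 5) x) := by
        rw [show digit _ 32 = _ from hbal, codeEval_xorSum]
    _ = ∑ x ∈ range 32, knuthDiv (codeEval t x) (f (codeEval t x)) :=
        sum_congr rfl fun x hx ↦ codeEval_digit_partialWord ht hv le_rfl (mem_range.mp hx)
    _ = ∑ y, knuthDiv y (f y) := sum_codeEval ht hF fun y ↦ knuthDiv y (f y)
    _ = ∑ y : F, y := (Finite.injective_iff_bijective.mp hinj).sum_comp (fun y ↦ y)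
    _ = 0 := by simpa using FiniteField.sum_pow_lt_card_sub_one F 1 (by rw [hF]; norm_num)

end Words

section Search

-- Recursors and bare `Nat` operations keep the kernel evaluation of `refutes` fast.

/-- Whether `p` holds on all of `vs`. -/
noncomputable def allOf (vs : List ℕ) (p : ℕ → Bool) : Bool :=
  List.rec true (fun v _ ih ↦ bif p v then ih else false) vs

/-- Adds the first `n` base-`32` digits of `w` one by one to the set of digits marked by the bits of
`used`, and applies `p` to the resulting set. The value is `true` as soon as a digit repeats. -/
noncomputable def occupy (n : ℕ) : ℕ → ℕ → (ℕ → Bool) → Bool :=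
  Nat.rec (fun _ used p ↦ p used)
    (fun _ ih w used p ↦
      bif Nat.beq (Nat.land used (Nat.shiftLeft 1 (Nat.mod w 32))) 0
      then ih (Nat.shiftRight w 5) (Nat.lor used (Nat.shiftLeft 1 (Nat.mod w 32))) p
      else true) n

/-- Depth-first search for a way of adding to `V` one word from each level. The first `n` digits of
`V` are final and marked in `used`; each level doubles `n`. The value is `true` when every choice
leads to a repeated digit. -/
noncomputable def refutes (Ls : List (ℕ → List ℕ)) : ℕ → ℕ → ℕ → Bool :=
  List.rec (fun _ _ _ ↦ false)
    (fun L _ ih n used V ↦ allOf (L V) fun W ↦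
      occupy n (Nat.shiftRight (Nat.xor V W) (Nat.mul 5 n)) used fun used' ↦
        ih (Nat.mul 2 n) used' (Nat.xor V W)) Ls

/-- The possible words for `f(tʲ)`. -/
def rows (j : ℕ) : List ℕ := (List.range 32).map (rowWord j)

/-- The words in `rows 4`, grouped by their check digit. -/
def buckets : List (List ℕ) :=
  (List.range 32).map fun s ↦ (rows 4).filter fun w ↦ digit w 32 == s

/-- The candidates at each level. The codes `2, 6, 9` represent the Frobenius orbits of nonzero
elements of trace `0`, and the last word is constrained by the check digit. -/
def levels : List (ℕ → List ℕ) :=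
  [fun _ ↦ [2, 6, 9].map (rowWord 0), fun _ ↦ rows 1, fun _ ↦ rows 2, fun _ ↦ rows 3,
    fun V ↦ buckets.getD (digit V 32) []]

theorem allOf_eq_true {vs : List ℕ} {p : ℕ → Bool} : allOf vs p = true ↔ ∀ v ∈ vs, p v = true := by
  induction vs with
  | nil => simp [allOf]
  | cons v vs ih =>
    have h : allOf (v :: vs) p = bif p v then allOf vs p else false := rfl
    cases hv : p v <;> simp [h, hv, ih]

theorem occupy_succ (n w used : ℕ) (p : ℕ → Bool) :
    occupy (n + 1) w used p =
      bif (used &&& 1 <<< (w % 32)).beq 0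
      then occupy n (w >>> 5) (used ||| 1 <<< (w % 32)) p else true := rfl

theorem refutes_cons (L : ℕ → List ℕ) (Ls : List (ℕ → List ℕ)) (n used V : ℕ) :
    refutes (L :: Ls) n used V = allOf (L V) fun W ↦
      occupy n ((V ^^^ W) >>> (5 * n)) used fun used' ↦ refutes Ls (2 * n) used' (V ^^^ W) := rfl

/-- The bits of `used` mark exactly `c 0, …, c (n - 1)`. -/
def Marks (c : ℕ → ℕ) (n used : ℕ) : Prop := ∀ a, used.testBit a = true ↔ ∃ x < n, c x = a

theorem marks_one {c : ℕ → ℕ} (h0 : c 0 = 0) : Marks c 1 1 := by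
  intro a
  rw [Nat.testBit_one_eq_true_iff_self_eq_zero]
  simp [h0, eq_comm]

theorem Marks.succ {c : ℕ → ℕ} {n used : ℕ} (h : Marks c n used) :
    Marks c (n + 1) (used ||| 1 <<< c n) := by
  intro a
  rw [Nat.exists_lt_succ_right, ← h a]
  simp [Nat.one_shiftLeft, Nat.testBit_two_pow]

theorem digit_shiftRight (w n i : ℕ) : digit (w >>> (5 * n)) i = digit w (n + i) := by
  rw [digit, digit, Nat.shiftRight_eq_div_pow, pow_mul, Nat.div_div_eq_div_mul, pow_add]
  norm_num

theorem Marks.exists_of_occupy {c : ℕ → ℕ} {p : ℕ → Bool} {n : ℕ} :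
    ∀ {s w used : ℕ}, Marks c s used → Set.InjOn c (Set.Iio (s + n)) →
      (∀ i < n, digit w i = c (s + i)) → occupy n w used p = true →
      ∃ used', Marks c (s + n) used' ∧ p used' = true := by
  induction n with
  | zero => exact fun hm _ _ h ↦ ⟨_, hm, h⟩
  | succ n ih =>
    intro s w used hm hinj hdigit h
    have hs : w % 32 = c s := by simpa [digit] using hdigit 0 (by omega)
    have hfree : used.testBit (c s) = false := by
      rw [Bool.eq_false_iff, ne_eq, hm]
      rintro ⟨x, hx, hxs⟩
      exact hx.ne (hinj (by simp; omega) (by simp) hxs)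
    rw [occupy_succ, hs] at h
    rw [show s + (n + 1) = s + 1 + n by omega] at hinj ⊢
    refine ih hm.succ hinj (fun i hi ↦ ?_) ?_ (w := w >>> 5)
    · rw [← mul_one 5, digit_shiftRight, hdigit _ (by omega), add_assoc]
    · simpa [Nat.one_shiftLeft, Nat.and_two_pow, hfree] using h

theorem Marks.exists_of_refutes_cons {c : ℕ → ℕ} {L : ℕ → List ℕ} {Ls : List (ℕ → List ℕ)}
    {n used V W : ℕ} (hm : Marks c n used) (hinj : Set.InjOn c (Set.Iio (2 * n)))
    (hdigit : ∀ x < 2 * n, digit (V ^^^ W) x = c x) (hW : W ∈ L V)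
    (h : refutes (L :: Ls) n used V = true) :
    ∃ used', Marks c (2 * n) used' ∧ refutes Ls (2 * n) used' (V ^^^ W) = true := by
  rw [refutes_cons, allOf_eq_true] at h
  rw [two_mul] at hinj hdigit ⊢
  refine hm.exists_of_occupy hinj (fun i hi ↦ ?_) (by simpa only [two_mul] using h W hW)
  rw [digit_shiftRight, hdigit _ (by omega)]

theorem refutes_eq_false {c W : ℕ → ℕ} {Ls : List (ℕ → List ℕ)} (h0 : c 0 = 0)
    (hinj : Set.InjOn c (Set.Iio (2 ^ Ls.length)))
    (hdigit : ∀ k ≤ Ls.length, ∀ x < 2 ^ k, digit (xorSum W k) x = c x)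
    (hW : ∀ (k : ℕ) (hk : k < Ls.length), W k ∈ Ls[k] (xorSum W k)) :
    refutes Ls 1 1 0 = false := by
  by_contra h
  have hstep : ∀ k ≤ Ls.length, ∃ used',
      Marks c (2 ^ k) used' ∧ refutes (Ls.drop k) (2 ^ k) used' (xorSum W k) = true := by
    intro k
    induction k with
    | zero => exact fun _ ↦ ⟨1, marks_one h0, by simpa [xorSum] using h⟩
    | succ k ih =>
      intro hk
      obtain ⟨used', hm', h'⟩ := ih (by omega)
      rw [List.drop_eq_getElem_cons hk] at h'
      rw [pow_succ']
      refine hm'.exists_of_refutes_cons (hinj.mono ?_) (fun x hx ↦ ?_) (hW k hk) h'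
      · rw [← pow_succ']
        exact Set.Iio_subset_Iio (Nat.pow_le_pow_right two_pos hk)
      · exact hdigit (k + 1) hk x (by rwa [pow_succ'])
  obtain ⟨_, -, hnil⟩ := hstep _ le_rfl
  rw [List.drop_length] at hnil
  exact Bool.false_ne_true hnil

set_option maxRecDepth 100000 in
theorem refutes_levels : refutes levels 1 1 0 = true := by decide +kernel

theorem mem_rows {j v : ℕ} (hv : v < 32) : rowWord j v ∈ rows j :=
  List.mem_map_of_mem (List.mem_range.mpr hv)

theorem mem_buckets {w s : ℕ} (hw : w ∈ rows 4) (hs : digit w 32 = s) :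
    w ∈ buckets.getD s [] := by
  have hs32 : s < 32 := hs ▸ digit_lt w 32
  simp [buckets, List.getD_eq_getElem?_getD, hs32, hw, hs]

theorem mem_levels {v : ℕ → ℕ} (hv : ∀ j, v j < 32) (hv0 : v 0 ∈ [2, 6, 9])
    (hpar : digit (partialWord v 5) 32 = 0) (k : ℕ) (hk : k < levels.length) :
    rowWord k (v k) ∈ levels[k] (partialWord v k) := by
  have hk5 : k < 5 := hk
  interval_cases k
  · exact List.mem_map_of_mem hv0
  · exact mem_rows (hv 1)
  · exact mem_rows (hv 2)
  · exact mem_rows (hv 3)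
  · rw [partialWord, xorSum, digit_xor, Nat.xor_eq_zero_iff] at hpar
    exact mem_buckets (mem_rows (hv 4)) hpar.symm

end Search

section Obstruction

variable {F : Type*} [Field F] [CharP F 2] [Fintype F] (hF : Fintype.card F = 32)
include hF

theorem absTrace_apply_one {f : F →+ F} (hinj : Function.Injective fun x ↦ knuthDiv x (f x)) :
    absTrace (f 1) = 0 := by
  obtain ⟨t, ht⟩ := exists_pow_five_eq hF
  obtain ⟨v, hv32, hv⟩ := exists_codes ht hF f
  have hrow (j : ℕ) (hj : j < 5) : absTrace (codeEval t (digit (rowWord j (v j)) 32)) =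
      if j = 0 then absTrace (codeEval t (v j)) else 0 := by
    rw [← codeEval_codeTrace ht, codeTrace_digit_rowWord j hj _ (hv32 j),
      apply_ite (codeEval t), codeEval_codeTrace ht, codeEval_zero]
  have hcheck := congrArg (fun n ↦ absTrace (codeEval t n))
    (digit_partialWord_thirtyTwo ht hv hinj hF)
  simpa [partialWord, digit_xorSum, codeEval_xorSum, sum_range_succ, absTrace_add, hrow, hv]
    using hcheck

theorem exists_root_codeEval_eq {y : F} (hy : y ≠ 0) (htr : absTrace y = 0) :
    ∃ t : F, t ^ 5 = t ^ 2 + 1 ∧ ∃ m ∈ [2, 6, 9], codeEval t m = y := by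
  obtain ⟨t, ht⟩ := exists_pow_five_eq hF
  obtain ⟨n, hn, rfl⟩ := exists_codeEval_eq ht hF y
  have horbit : ∀ n < 32, n ≠ 0 → codeTrace n = 0 →
      ∃ k < 5, ∃ m ∈ [2, 6, 9], codeSq^[k] m = n := by
    decide +kernel
  have htrace : ∀ n < 32, codeTrace n < 32 := by decide +kernel
  rw [← codeEval_codeTrace ht] at htr
  obtain ⟨k, -, m, hm, rfl⟩ := horbit n hn (by rintro rfl; exact hy (codeEval_zero t))
    (codeEval_eq_zero ht (htrace n hn) htr)
  refine ⟨t ^ 2 ^ k, ?_, m, hm, ?_⟩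
  · rw [← pow_mul, mul_comm, pow_mul, ht, add_pow_char_pow, one_pow, ← pow_mul, ← pow_mul,
      mul_comm]
  · rw [codeEval_iterate_codeSq ht, codeEval, codeEval, bitSum, bitSum, sum_pow_char_pow]
    refine sum_congr rfl fun i _ ↦ ?_
    split_ifs
    · rw [← pow_mul, ← pow_mul, mul_comm]
    · simp

theorem not_injective_knuthDiv (f : F →+ F) : ¬ Function.Injective fun x ↦ knuthDiv x (f x) := by
  intro hinj
  have hf1 : f 1 ≠ 0 := fun h ↦ one_ne_zero (hinj (by simp [h, knuthDiv]))
  obtain ⟨t, ht, m, hm, hmf⟩ := exists_root_codeEval_eq hF hf1 (absTrace_apply_one hF hinj)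
  obtain ⟨v, hv32, hv⟩ := exists_codes ht hF f
  have hm32 : m < 32 := by fin_cases hm <;> norm_num
  have hv0 : v 0 = m :=
    codeEval_injOn ht (by simpa using hv32 0) (by simpa using hm32) (by rw [hv, pow_zero, hmf])
  have hfalse := refutes_eq_false (Ls := levels) (digit_partialWord_zero ht hv)
    (injOn_digit_partialWord ht hv hinj) (fun _ hk _ hx ↦ digit_partialWord_of_lt ht hv hk hx)
    (mem_levels hv32 (hv0 ▸ hm) (digit_partialWord_thirtyTwo ht hv hinj hF))
  exact Bool.false_ne_true (hfalse.symm.trans refutes_levels)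

end Obstruction

end SymplecticKnuth

/-- There is no translation hyperoval of type (a) in the symplectic Knuth presemifield
plane `Π(K₅^{td})` of order `32`: there is no `F₂`-linear (i.e. additive) bijection
`f : F₃₂ → F₃₂` such that for every nonzero `a` the set `{x : f(x) + x∘a = 0}` has
exactly `2` elements, where `x ∘ y = xy + Tr(x)·y¹⁶ + Tr(x²y)` and
`Tr(x) = x + x² + x⁴ + x⁸ + x¹⁶`. -/
theorem no_type_a_hyperoval_K5td
    {F : Type*} [Field F] [Fintype F] (hF : Fintype.card F = 32)
    (Tr : F → F) (hTr : ∀ x : F, Tr x = x + x ^ 2 + x ^ 4 + x ^ 8 + x ^ 16)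
    (smul : F → F → F)
    (hsmul : ∀ x y : F, smul x y = x * y + Tr x * y ^ 16 + Tr (x ^ 2 * y)) :
    ¬ ∃ f : F → F, Function.Bijective f ∧ (∀ x y : F, f (x + y) = f x + f y) ∧
      ∀ a : F, a ≠ 0 → ({x : F | f x + smul x a = 0}).ncard = 2 := by
  rintro ⟨f, hf, hadd, hker⟩
  have : CharP F 2 := charP_of_card_eq_prime_pow (f := 5) (by rw [hF]; norm_num)
  obtain rfl : Tr = SymplecticKnuth.absTrace := funext hTr
  obtain rfl : smul = SymplecticKnuth.knuthMul := funext₂ hsmul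
  exact SymplecticKnuth.not_injective_knuthDiv hF (AddMonoidHom.mk' f hadd)
    (SymplecticKnuth.injective_knuthDiv hF hf.injective hker)
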